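/- Let S be a unital inverse semigroup and ξ ∈ ℓ²(S). Then the function φ = ξ • ξ̃, i.e. φ(x) = ∑_{y : x⋆ x = y y⋆} ξ(x y) · conj(ξ(y)), is an extendible restricted positive definite function on S. (Theorem 2.1, (ii) ⇒ (i)) -/

import Mathlib

open scoped Classical ComplexOrder

noncomputable section

/-- A unital inverse semigroup: a monoid with an involution `star` satisfying
`star (x*y) = star y * star x`, `star (star x) = x`, `x * star x * x = x`,
`star x * x * star x = star x`, in which all idempotents commute. -/
class InverseSemigroup (S : Type*) extends Monoid S, StarMul S where
  mul_star_mul_self : ∀ x : S, x * star x * x = x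
  star_mul_self_star : ∀ x : S, star x * x * star x = star x
  idem_comm : ∀ e f : S, e * e = e → f * f = f → e * f = f * e

variable {S : Type*} [InverseSemigroup S]

/-- The restricted left translate `λ_r(x)u`. -/
def restrictedTranslate (x : S) (u : S → ℂ) : S → ℂ := fun y =>
  if x * star x = y * star y then u (star x * y) else 0

/-- `u` is restricted positive definite. -/
def IsRestrictedPosDef (u : S → ℂ) : Prop :=
  (∃ M : ℝ, ∀ x, ‖u x‖ ≤ M) ∧
  ∀ (n : ℕ) (x : Fin n → S) (c : Fin n → ℂ),
    0 ≤ ∑ i, ∑ j, (starRingEnd ℂ) (c i) * c j * restrictedTranslate (x i) u (x j)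

/-- `u` is extendible restricted positive definite. -/
def IsExtendibleRPD (u : S → ℂ) : Prop :=
  IsRestrictedPosDef u ∧ (∀ x, u (star x) = (starRingEnd ℂ) (u x)) ∧
  ∃ C : ℝ, 0 < C ∧ ∀ (n : ℕ) (x : Fin n → S) (c : Fin n → ℂ),
    ((‖∑ i, c i * u (x i)‖ ^ 2 : ℝ) : ℂ) ≤
      (C : ℂ) * ∑ i, ∑ j, (starRingEnd ℂ) (c i) * c j * restrictedTranslate (x i) u (x j)

/-- The restricted convolution `ξ • η`. -/
def rconv (ξ η : S → ℂ) : S → ℂ := fun x =>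
  ∑' y, if star x * x = y * star y then ξ (x * y) * η (star y) else 0

/-- `ξ̃(x) = conj (ξ (star x))`. -/
def tilde (ξ : S → ℂ) : S → ℂ := fun x => (starRingEnd ℂ) (ξ (star x))

/-- Multiplication of the restricted semigroup `S_r = Option S`. -/
def rmul : Option S → Option S → Option S
  | some x, some y => if star x * x = y * star y then some (x * y) else none
  | _, _ => none

/-- Involution of the restricted semigroup `S_r = Option S`. -/
def rstar : Option S → Option S
  | some x => some (star x)
  | none => none

/-!
The restricted left translations act on `ℓ²(S)` as a `⋆`-representation of the restricted semigroup
`S_r`: a product of two of them is again one of them, or zero when the restricted product is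
undefined. After left multiplication by `x` is used to re-index the sum, `ξ • ξ̃` becomes the
coefficient `x ↦ ⟪ξ̄, λ_r(x) ξ̄⟫` of this representation.

For the coefficient `u(x) = ⟪v, π(x) v⟫` of any such representation,
`(λ_r(x)u)(y) = ⟪v, π(x)⋆ π(y) v⟫`, both sides vanishing when `x x⋆ ≠ y y⋆`. The quadratic form in
the definition of positive definiteness is therefore `‖w‖²` with `w = ∑ cᵢ π(xᵢ) v`, whereas
`∑ cᵢ u(xᵢ) = ⟪v, w⟫`, so extendibility is the Cauchy–Schwarz inequality.
-/

namespace InverseSemigroup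

lemma star_mul_mul_cancel {x y : S} (h : star x * x = y * star y) : star x * (x * y) = y := by
  rw [← mul_assoc, h, mul_star_mul_self]

lemma mul_mul_star_mul {x y : S} (h : star x * x = y * star y) :
    x * y * star (x * y) = x * star x := by
  rw [star_mul, mul_assoc, ← mul_assoc y, ← h, star_mul_self_star]

lemma mul_star_mul_cancel {x z : S} (h : x * star x = z * star z) : x * (star x * z) = z := by
  rw [← mul_assoc, h, mul_star_mul_self]

lemma star_mul_mul_star_mul {x z : S} (h : x * star x = z * star z) :
    star x * z * star (star x * z) = star x * x := by
  simpa only [star_star] using mul_mul_star_mul (x := star x) (by rwa [star_star])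

/-- Green's lemma for inverse semigroups: left multiplication by `x` is a bijection from the
`𝓡`-class of `star x` onto the `𝓡`-class of `x`. An `𝓡`-class is encoded by the common range
idempotent `y * star y` of its elements. -/
def mulLeftEquiv (x : S) :
    {y : S // star x * x = y * star y} ≃ {z : S // x * star x = z * star z} where
  toFun y := ⟨x * y, (mul_mul_star_mul y.2).symm⟩
  invFun z := ⟨star x * z, (star_mul_mul_star_mul z.2).symm⟩
  left_inv y := Subtype.ext (star_mul_mul_cancel y.2)
  right_inv z := Subtype.ext (mul_star_mul_cancel z.2)

lemma tsum_ite_mul_left {M : Type*} [AddCommMonoid M] [TopologicalSpace M] (x : S) (f : S → M) :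
    ∑' y, (if star x * x = y * star y then f (x * y) else 0) =
      ∑' z, if x * star x = z * star z then f z else 0 :=
  calc ∑' y, (if star x * x = y * star y then f (x * y) else 0)
      = ∑' y : {y : S // star x * x = y * star y}, f (x * y) :=
        (tsum_subtype {y : S | star x * x = y * star y} fun y => f (x * y)).symm
    _ = ∑' z : {z : S // x * star x = z * star z}, f z :=
        (mulLeftEquiv x).tsum_eq fun z => f z
    _ = ∑' z, if x * star x = z * star z then f z else 0 :=
        tsum_subtype {z : S | x * star x = z * star z} f

lemma summable_ite_star_mul {E : Type*} [AddCommGroup E] [UniformSpace E] [IsUniformAddGroup E]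
    [CompleteSpace E] {f : S → E} (hf : Summable f) (x : S) :
    Summable fun z => if x * star x = z * star z then f (star x * z) else 0 :=
  summable_subtype_iff_indicator (s := {z : S | x * star x = z * star z}).1 <|
    hf.comp_injective (Subtype.val_injective.comp (mulLeftEquiv x).symm.injective)

end InverseSemigroup

open InverseSemigroup

/-- A `⋆`-representation of the restricted semigroup `S_r` on a (pre-)Hilbert space, with the zero
of `S_r` acting as `0`. It is given on `S` only, and continuity is not part of the definition since
it is automatic (`IsRestrictedRep.norm_map_le`). -/
structure IsRestrictedRep {H : Type*} [NormedAddCommGroup H] [InnerProductSpace ℂ H]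
    (π : S → Module.End ℂ H) : Prop where
  inner_map_left : ∀ x v w, inner ℂ (π x v) w = inner ℂ v (π (star x) w)
  map_mul_map : ∀ x y, π x * π y = if star x * x = y * star y then π (x * y) else 0

namespace IsRestrictedRep

variable {H : Type*} [NormedAddCommGroup H] [InnerProductSpace ℂ H] {π : S → Module.End ℂ H}

lemma inner_map_map (hπ : IsRestrictedRep π) (x y : S) (v w : H) :
    inner ℂ (π x v) (π y w) =
      if x * star x = y * star y then inner ℂ v (π (star x * y) w) else 0 := by
  rw [hπ.inner_map_left, ← Module.End.mul_apply, hπ.map_mul_map, star_star]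
  split_ifs <;> simp

lemma norm_map_sq (hπ : IsRestrictedRep π) (x : S) (v : H) :
    ‖π x v‖ ^ 2 = RCLike.re (inner ℂ v (π (star x * x) v)) := by
  rw [norm_sq_eq_re_inner (𝕜 := ℂ), hπ.inner_map_map, if_pos rfl]

lemma norm_map_star_mul_self (hπ : IsRestrictedRep π) (x : S) (v : H) :
    ‖π (star x * x) v‖ = ‖π x v‖ := by
  have hidem : star (star x * x) * (star x * x) = star x * x := by
    rw [star_mul, star_star, ← mul_assoc, star_mul_self_star]
  refine (sq_eq_sq₀ (norm_nonneg _) (norm_nonneg _)).1 ?_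
  rw [hπ.norm_map_sq, hπ.norm_map_sq, hidem]

lemma norm_map_le (hπ : IsRestrictedRep π) (x : S) (v : H) : ‖π x v‖ ≤ ‖v‖ := by
  have hsq : ‖π x v‖ ^ 2 ≤ ‖v‖ * ‖π x v‖ :=
    calc ‖π x v‖ ^ 2 = RCLike.re (inner ℂ v (π (star x * x) v)) := hπ.norm_map_sq x v
      _ ≤ ‖v‖ * ‖π (star x * x) v‖ := re_inner_le_norm _ _
      _ = ‖v‖ * ‖π x v‖ := by rw [hπ.norm_map_star_mul_self]
  nlinarith [norm_nonneg v, norm_nonneg (π x v)]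

lemma restrictedTranslate_coefficient (hπ : IsRestrictedRep π) (v : H) (x y : S) :
    restrictedTranslate x (fun z => inner ℂ v (π z v)) y = inner ℂ (π x v) (π y v) :=
  (hπ.inner_map_map x y v v).symm

lemma sum_restrictedTranslate_coefficient (hπ : IsRestrictedRep π) (v : H) {ι : Type*} [Fintype ι]
    (x : ι → S) (c : ι → ℂ) :
    ∑ i, ∑ j, (starRingEnd ℂ) (c i) * c j *
        restrictedTranslate (x i) (fun z => inner ℂ v (π z v)) (x j) =
      ((‖∑ i, c i • π (x i) v‖ ^ 2 : ℝ) : ℂ) := by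
  calc _ = inner ℂ (∑ i, c i • π (x i) v) (∑ j, c j • π (x j) v) := by
        simp_rw [hπ.restrictedTranslate_coefficient, sum_inner, inner_sum, inner_smul_left,
          inner_smul_right, mul_assoc]
    _ = _ := by simp [inner_self_eq_norm_sq_to_K]

lemma isRestrictedPosDef_coefficient (hπ : IsRestrictedRep π) (v : H) :
    IsRestrictedPosDef fun x => inner ℂ v (π x v) := by
  refine ⟨⟨‖v‖ * ‖v‖, fun x => ?_⟩, fun n x c => ?_⟩
  · exact (norm_inner_le_norm _ _).trans (by gcongr; exact hπ.norm_map_le x v)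
  · rw [hπ.sum_restrictedTranslate_coefficient]
    exact Complex.zero_le_real.2 (sq_nonneg _)

lemma isExtendibleRPD_coefficient (hπ : IsRestrictedRep π) (v : H) :
    IsExtendibleRPD fun x => inner ℂ v (π x v) := by
  refine ⟨hπ.isRestrictedPosDef_coefficient v, fun x => ?_,
    ‖v‖ ^ 2 + 1, by positivity, fun n x c => ?_⟩
  · simp only [← hπ.inner_map_left, inner_conj_symm]
  · have hsum : ∑ i, c i * inner ℂ v (π (x i) v) = inner ℂ v (∑ i, c i • π (x i) v) := by
      simp only [inner_sum, inner_smul_right]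
    rw [hπ.sum_restrictedTranslate_coefficient, hsum, ← Complex.ofReal_mul, Complex.real_le_real]
    calc ‖inner ℂ v (∑ i, c i • π (x i) v)‖ ^ 2
        ≤ (‖v‖ * ‖∑ i, c i • π (x i) v‖) ^ 2 := by gcongr; exact norm_inner_le_norm _ _
      _ = ‖v‖ ^ 2 * ‖∑ i, c i • π (x i) v‖ ^ 2 := mul_pow _ _ _
      _ ≤ (‖v‖ ^ 2 + 1) * ‖∑ i, c i • π (x i) v‖ ^ 2 := by gcongr; exact (lt_add_one _).le

end IsRestrictedRep

lemma restrictedTranslate_add (x : S) (u v : S → ℂ) :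
    restrictedTranslate x (u + v) = restrictedTranslate x u + restrictedTranslate x v := by
  ext z
  by_cases h : x * star x = z * star z <;> simp [restrictedTranslate, h]

lemma restrictedTranslate_smul (x : S) (c : ℂ) (u : S → ℂ) :
    restrictedTranslate x (c • u) = c • restrictedTranslate x u := by
  ext z
  by_cases h : x * star x = z * star z <;> simp [restrictedTranslate, h]

lemma restrictedTranslate_restrictedTranslate (x y : S) (u : S → ℂ) :
    restrictedTranslate x (restrictedTranslate y u) =
      if star x * x = y * star y then restrictedTranslate (x * y) u else 0 := by
  ext z
  by_cases hxy : star x * x = y * star y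
  · simp only [if_pos hxy, restrictedTranslate, mul_mul_star_mul hxy]
    refine if_ctx_congr Iff.rfl (fun hz => ?_) fun _ => rfl
    rw [if_pos (hxy.symm.trans (star_mul_mul_star_mul hz).symm), star_mul, mul_assoc]
  · simp only [if_neg hxy, restrictedTranslate, Pi.zero_apply]
    exact ite_eq_right_iff.2 fun hz =>
      if_neg fun hy => hxy ((hy.trans (star_mul_mul_star_mul hz)).symm)

lemma memℓp_restrictedTranslate {p : ENNReal} (hp : 0 < p.toReal) {u : S → ℂ}
    (hu : Memℓp u p) (x : S) : Memℓp (restrictedTranslate x u) p := by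
  rw [memℓp_gen_iff hp] at hu ⊢
  refine (summable_ite_star_mul hu x).congr fun z => ?_
  unfold restrictedTranslate
  split_ifs <;> simp [hp.ne']

local notation "ℓ²(" T ")" => lp (fun _ : T => ℂ) 2

/-- The left regular representation of the restricted semigroup on `ℓ²(S)`, by restricted left
translations. -/
def restrictedLeftRegular (x : S) : Module.End ℂ ℓ²(S) where
  toFun f := ⟨restrictedTranslate x f, memℓp_restrictedTranslate (by simp) (lp.memℓp f) x⟩
  map_add' f g := lp.ext (restrictedTranslate_add x f g)
  map_smul' c f := lp.ext (restrictedTranslate_smul x c f)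

lemma coeFn_restrictedLeftRegular (x : S) (f : ℓ²(S)) :
    ⇑(restrictedLeftRegular x f) = restrictedTranslate x f :=
  rfl

lemma inner_restrictedLeftRegular_left (x : S) (f g : ℓ²(S)) :
    inner ℂ (restrictedLeftRegular x f) g = inner ℂ f (restrictedLeftRegular (star x) g) := by
  rw [lp.inner_eq_tsum, lp.inner_eq_tsum]
  calc ∑' z, inner ℂ (restrictedLeftRegular x f z) (g z)
      = ∑' z, if x * star x = z * star z then inner ℂ (f (star x * z)) (g z) else 0 := by
        simp [coeFn_restrictedLeftRegular, restrictedTranslate, apply_ite]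
    _ = ∑' y, if star x * x = y * star y then inner ℂ (f (star x * (x * y))) (g (x * y)) else 0 :=
        (tsum_ite_mul_left x fun z => inner ℂ (f (star x * z)) (g z)).symm
    _ = ∑' y, inner ℂ (f y) (restrictedLeftRegular (star x) g y) := by
        refine tsum_congr fun y => ?_
        rw [coeFn_restrictedLeftRegular, restrictedTranslate, star_star]
        split_ifs with h
        · rw [star_mul_mul_cancel h]
        · rw [inner_zero_right]

lemma isRestrictedRep_restrictedLeftRegular :
    IsRestrictedRep (restrictedLeftRegular : S → Module.End ℂ ℓ²(S)) where
  inner_map_left := inner_restrictedLeftRegular_left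
  map_mul_map x y := by
    refine LinearMap.ext fun f => lp.ext ?_
    rw [Module.End.mul_apply, coeFn_restrictedLeftRegular, coeFn_restrictedLeftRegular,
      restrictedTranslate_restrictedTranslate]
    split_ifs <;> rfl

lemma rconv_tilde_eq_inner (f g : ℓ²(S)) (x : S) :
    rconv f (tilde g) x = inner ℂ (star f) (restrictedLeftRegular x (star g)) := by
  rw [lp.inner_eq_tsum]
  calc rconv f (tilde g) x
      = ∑' y, if star x * x = y * star y then
          f (x * y) * (starRingEnd ℂ) (g (star x * (x * y))) else 0 := by
        refine tsum_congr fun y => if_ctx_congr Iff.rfl (fun h => ?_) fun _ => rfl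
        rw [star_mul_mul_cancel h, tilde, star_star]
    _ = ∑' z, if x * star x = z * star z then
          f z * (starRingEnd ℂ) (g (star x * z)) else 0 :=
        tsum_ite_mul_left x fun z => f z * (starRingEnd ℂ) (g (star x * z))
    _ = ∑' z, inner ℂ (star f z) (restrictedLeftRegular x (star g) z) := by
        refine tsum_congr fun z => ?_
        rw [coeFn_restrictedLeftRegular, restrictedTranslate]
        split_ifs <;> simp [mul_comm]

/-- Theorem 2.1, (ii) ⇒ (i): for `ξ ∈ ℓ²(S)`, the function `ξ • ξ̃` is an extendible
restricted positive definite function on `S`. -/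
theorem rconv_tilde_self_extendibleRPD {S : Type*} [InverseSemigroup S]
    (ξ : S → ℂ) (hξ : Memℓp ξ 2) :
    IsExtendibleRPD (rconv ξ (tilde ξ)) := by
  let f : ℓ²(S) := ⟨ξ, hξ⟩
  have hcoeff : rconv ξ (tilde ξ) =
      fun x => inner ℂ (star f) (restrictedLeftRegular x (star f)) :=
    funext (rconv_tilde_eq_inner f f)
  rw [hcoeff]
  exact isRestrictedRep_restrictedLeftRegular.isExtendibleRPD_coefficient (star f)
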